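/- Let M₀ ∈ ℝ, σ > 0 and λ > 0 with λ ≥ √(2/π)·σ. Then the Cauchy PDF f_C(x; M₀, λ) and the Gaussian PDF f_G(x; M₀, σ) have exactly one intersection on (−∞, M₀): there exists a unique x < M₀ such that f_C(x; M₀, λ) = f_G(x; M₀, σ). -/

import Mathlib

/-- Gaussian PDF with location `μ` and scale `σ`. -/
noncomputable def gaussPDF (μ σ x : ℝ) : ℝ :=
  (1 / (σ * Real.sqrt (2 * Real.pi))) * Real.exp (-(x - μ) ^ 2 / (2 * σ ^ 2))

/-- Cauchy PDF with location `m` and scale `lam`. -/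
noncomputable def cauchyPDF (m lam x : ℝ) : ℝ :=
  1 / (lam * Real.pi * (1 + ((x - m) / lam) ^ 2))

/-- The convex function `u ↦ a * exp u` meets the line `u ↦ c + b * u` exactly once on `(0, ∞)`
when it starts below the line, or starts on it with a smaller slope. -/
lemma existsUnique_pos_mul_exp_eq {a b c : ℝ} (ha : 0 < a) (hb : 0 < b) (hac : a ≤ c)
    (hslope : a = c → a < b) : ∃! u : ℝ, 0 < u ∧ a * Real.exp u = c + b * u := by
  have hneg : ∃ p : ℝ, 0 ≤ p ∧ a * Real.exp p < c + b * p := by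
    rcases hac.lt_or_eq with hlt | heq
    · exact ⟨0, le_rfl, by simpa using hlt⟩
    · have hab := hslope heq
      refine ⟨Real.log (b / a), Real.log_nonneg ((one_le_div ha).2 hab.le), ?_⟩
      rw [Real.exp_log (by positivity), mul_div_cancel₀ _ ha.ne', ← heq]
      have hlog := Real.log_lt_sub_one_of_pos (div_pos ha hb) ((div_lt_one hb).2 hab).ne
      rw [← inv_div, Real.log_inv] at hlog
      have hmul := mul_lt_mul_of_pos_left hlog hb
      have hcancel : b * ((b / a)⁻¹ - 1) = a - b := by field_simp
      linarith
  obtain ⟨p, hp, hgp⟩ := hneg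
  have hc : 0 < c := ha.trans_le hac
  obtain ⟨q, hpq, hgq⟩ : ∃ q : ℝ, p ≤ q ∧ c + b * q ≤ a * Real.exp q := by
    have hd : 0 < 2 * (b + c) / a := by positivity
    set q := p + 1 + 2 * (b + c) / a with hq
    have hq1 : 1 ≤ q := by linarith
    refine ⟨q, by linarith, ?_⟩
    have hexp := mul_le_mul_of_nonneg_left
      (Real.quadratic_le_exp_of_nonneg (zero_le_one.trans hq1)) ha.le
    have haq : 2 * (b + c) ≤ a * q := by
      rw [mul_comm a]
      exact (div_le_iff₀ ha).1 (by linarith)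
    nlinarith [mul_le_mul_of_nonneg_right haq (zero_le_one.trans hq1),
      mul_le_mul_of_nonneg_left hq1 hc.le]
  obtain ⟨u, ⟨hpu, -⟩, hu⟩ := intermediate_value_Icc hpq
    (f := fun u => a * Real.exp u - (c + b * u)) (by fun_prop)
    (show (0 : ℝ) ∈ _ from ⟨by linarith, by linarith⟩)
  have hu' : a * Real.exp u = c + b * u := sub_eq_zero.1 hu
  have hu0 : 0 < u := by
    refine (hp.trans hpu).lt_of_ne fun h0 => ?_
    have hpu' : p = u := by linarith
    rw [hpu'] at hgp
    exact hgp.ne hu'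
  have hno : ∀ v w : ℝ, 0 < v → v < w → a * Real.exp v = c + b * v →
      a * Real.exp w ≠ c + b * w := by
    intro v w hv hvw hgv hgw
    have hw : 0 < w := hv.trans hvw
    have hconv := strictConvexOn_exp.2 (Set.mem_univ 0) (Set.mem_univ w) hw.ne
      (show 0 < 1 - v / w from sub_pos.2 ((div_lt_one hw).2 hvw)) (div_pos hv hw) (by ring)
    simp only [smul_eq_mul, mul_zero, zero_add, Real.exp_zero, mul_one,
      div_mul_cancel₀ _ hw.ne'] at hconv
    have hmul := mul_lt_mul_of_pos_left hconv ha
    have hexpand : a * (1 - v / w + v / w * Real.exp w)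
        = a * (1 - v / w) + v / w * (a * Real.exp w) := by ring
    have hline : v / w * (c + b * w) = c * (v / w) + b * v := by field_simp
    have hstart : a * (1 - v / w) ≤ c * (1 - v / w) :=
      mul_le_mul_of_nonneg_right hac (sub_nonneg.2 ((div_lt_one hw).2 hvw).le)
    rw [hexpand, hgw, hline, hgv] at hmul
    linarith
  refine ⟨u, ⟨hu0, hu'⟩, fun v ⟨hv, hgv⟩ => ?_⟩
  rcases lt_trichotomy v u with hlt | heq | hgt
  · exact absurd hu' (hno v u hv hlt hgv)
  · exact heq
  · exact absurd hgv (hno u v hu0 hgt hu')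

lemma cauchyPDF_eq_gaussPDF_iff {M₀ σ lam : ℝ} (hσ : 0 < σ) (hlam : 0 < lam) (x : ℝ) :
    cauchyPDF M₀ lam x = gaussPDF M₀ σ x ↔
      lam * σ * Real.sqrt (2 / Real.pi) * Real.exp ((x - M₀) ^ 2 / (2 * σ ^ 2)) =
        lam ^ 2 + 2 * σ ^ 2 * ((x - M₀) ^ 2 / (2 * σ ^ 2)) := by
  have hpi := Real.pi_pos
  have hsqrt : Real.sqrt (2 * Real.pi) = Real.pi * Real.sqrt (2 / Real.pi) := by
    rw [show 2 * Real.pi = Real.pi ^ 2 * (2 / Real.pi) by field_simp,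
      Real.sqrt_mul (sq_nonneg _), Real.sqrt_sq hpi.le]
  have hC : cauchyPDF M₀ lam x = lam / (Real.pi * (lam ^ 2 + (x - M₀) ^ 2)) := by
    unfold cauchyPDF
    have : 0 < 1 + ((x - M₀) / lam) ^ 2 := by positivity
    rw [div_eq_div_iff (by positivity) (by positivity)]
    field_simp
  have hG : gaussPDF M₀ σ x = 1 / (σ * (Real.pi * Real.sqrt (2 / Real.pi)) *
      Real.exp ((x - M₀) ^ 2 / (2 * σ ^ 2))) := by
    unfold gaussPDF
    rw [hsqrt, neg_div, Real.exp_neg, one_div, one_div, ← mul_inv]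
  rw [hC, hG, div_eq_div_iff (by positivity) (by positivity),
    mul_div_cancel₀ _ (show 2 * σ ^ 2 ≠ 0 by positivity)]
  constructor
  · intro h
    refine mul_left_cancel₀ hpi.ne' ?_
    linarith
  · intro h
    linear_combination Real.pi * h

/-- If `λ ≥ √(2/π)·σ`, the Cauchy PDF `f_C(·; M₀, λ)` and the Gaussian PDF
`f_G(·; M₀, σ)` intersect exactly once on `(−∞, M₀)`. -/
theorem cauchy_gauss_pdf_unique_intersection (M₀ σ lam : ℝ) (hσ : 0 < σ) (hlam : 0 < lam)
    (h : lam ≥ Real.sqrt (2 / Real.pi) * σ) :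
    ∃! x : ℝ, x < M₀ ∧ cauchyPDF M₀ lam x = gaussPDF M₀ σ x := by
  have hpi := Real.pi_gt_three
  have hs1 : Real.sqrt (2 / Real.pi) ^ 2 < 1 := by
    rw [Real.sq_sqrt (by positivity), div_lt_one (by positivity)]
    linarith
  have hac : lam * σ * Real.sqrt (2 / Real.pi) ≤ lam ^ 2 := by
    have := mul_le_mul_of_nonneg_left h hlam.le
    linarith
  have hslope : lam * σ * Real.sqrt (2 / Real.pi) = lam ^ 2 →
      lam * σ * Real.sqrt (2 / Real.pi) < 2 * σ ^ 2 := by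
    intro heq
    have hl : lam = σ * Real.sqrt (2 / Real.pi) :=
      mul_left_cancel₀ hlam.ne' (by linarith)
    rw [heq, hl, mul_pow]
    nlinarith [pow_pos hσ 2]
  obtain ⟨u, ⟨hu0, hu⟩, huniq⟩ :=
    existsUnique_pos_mul_exp_eq (by positivity) (show 0 < 2 * σ ^ 2 by positivity) hac hslope
  have hσ2 : 0 < 2 * σ ^ 2 := by positivity
  have hr : 0 < Real.sqrt (2 * σ ^ 2 * u) := Real.sqrt_pos.2 (by positivity)
  refine ⟨M₀ - Real.sqrt (2 * σ ^ 2 * u), ⟨by linarith, ?_⟩, fun y ⟨hy, hgy⟩ => ?_⟩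
  · rw [cauchyPDF_eq_gaussPDF_iff hσ hlam, sub_sub_cancel_left, neg_sq,
      Real.sq_sqrt (by positivity), mul_div_cancel_left₀ _ hσ2.ne']
    exact hu
  · have hyu := huniq _ ⟨div_pos (sq_pos_of_neg (sub_neg.2 hy)) hσ2,
      (cauchyPDF_eq_gaussPDF_iff hσ hlam y).1 hgy⟩
    rw [← hyu, mul_div_cancel₀ _ hσ2.ne', Real.sqrt_sq_eq_abs, abs_of_neg (sub_neg.2 hy)]
    ring
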